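/- arXiv:2402.05021 — 7 statements merged into one kernel-verified Lean document; each statement's English description precedes it below -/
import Mathlib

section
/- Let k be an algebraically closed field of characteristic 0, let n ≥ 3 be an integer, and let q be a nondegenerate quadratic form on V = k^{n+2} with polar bilinear form B_q. Let x ∈ V be a nonzero vector with q(x) = 0, and let G_x = {M ∈ SO(q) : M·x ∈ k·x} be the stabilizer in SO(q) of the projective point [x]. Then the orbits of the induced action of G_x on the projective quadric Q = {[y] ∈ ℙ(V) : q(y) = 0} are exactly the three sets: the single point {[x]}; the set H ∖ {[x]}, where H = {[y] ∈ Q : B_q(x,y) = 0}; and the set Q ∖ H. -/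
open QuadraticMap

/-- The orbit of a projective point under the stabilizer, inside `SO(q)`, of the
projective point `[x]` (the elements of `SO(q)` being the determinant-one linear
automorphisms preserving the quadratic form `q`). -/
def stabOrbit {k : Type*} [Field k] {N : ℕ}
    (q : QuadraticForm k (Fin N → k)) (x : Fin N → k)
    (p : Projectivization k (Fin N → k)) : Set (Projectivization k (Fin N → k)) :=
  {p' | ∃ f : (Fin N → k) ≃ₗ[k] (Fin N → k),
      (∀ v, q (f v) = q v) ∧
      LinearMap.det (f : (Fin N → k) →ₗ[k] (Fin N → k)) = 1 ∧
      (∃ c : k, f x = c • x) ∧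
      Projectivization.map (f : (Fin N → k) →ₗ[k] (Fin N → k)) f.injective p = p'}

section QuadraticSpace

variable {k V : Type*} [Field k] [AddCommGroup V] [Module k V]
  {q : QuadraticForm k V}

theorem map_sub_smul_eq (q : QuadraticForm k V) (u v : V) (c : k) :
    q (u - c • v) = q u - c * polar q v u + c * c * q v := by
  rw [sub_eq_add_neg, ← neg_smul, QuadraticMap.map_add q, QuadraticMap.map_smul,
    polar_smul_right, polar_comm q u v]
  simp only [smul_eq_mul]
  ring

/-- The reflection of a quadratic space in an anisotropic vector. -/
theorem exists_reflection [FiniteDimensional k V] {v : V} (hv : q v ≠ 0) :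
    ∃ s : V ≃ₗ[k] V, (∀ u, q (s u) = q u) ∧ LinearMap.det (s : V →ₗ[k] V) = -1 ∧
      ∀ u, s u = u - (polar q v u / q v) • v := by
  let f : Module.Dual k V := (q v)⁻¹ • polarBilin q v
  have hf (u : V) : f u = polar q v u / q v := by
    simp [f, div_eq_inv_mul]
  have hfv : f v = 2 := by
    rw [hf, polar_self, nsmul_eq_mul, mul_div_cancel_right₀ _ hv]
    norm_num
  have hs (u : V) : Module.reflection hfv u = u - (polar q v u / q v) • v := by
    rw [Module.reflection_apply, hf]
  refine ⟨Module.reflection hfv, fun u ↦ ?_, ?_, hs⟩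
  · rw [hs, map_sub_smul_eq]
    field_simp
    ring
  · have : (Module.reflection hfv : V →ₗ[k] V) = LinearMap.transvection f (-v) := by
      ext u
      simp [Module.reflection_apply, LinearMap.transvection.apply, sub_eq_add_neg]
    rw [this, LinearMap.transvection.det, map_neg, hfv]
    norm_num

theorem polarBilin_nondegenerate (hq : ∀ v, (∀ w, polar q v w = 0) → v = 0) :
    LinearMap.BilinForm.Nondegenerate (polarBilin q) :=
  ⟨hq, fun v h ↦ hq v fun w ↦ (polar_comm q v w).trans (h w)⟩

theorem polarBilin_isRefl (q : QuadraticForm k V) :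
    LinearMap.BilinForm.IsRefl (polarBilin q) :=
  fun v w h ↦ (polar_comm q w v).trans h

/-- In a nondegenerate quadratic space of dimension at least five, the orthogonal complement of
any two vectors contains an anisotropic vector. -/
theorem exists_anisotropic_orthogonal [FiniteDimensional k V] (hq : ∀ v, (∀ w, polar q v w = 0) → v = 0)
    (hV : 5 ≤ Module.finrank k V) (x z : V) :
    ∃ w, polar q x w = 0 ∧ polar q z w = 0 ∧ q w ≠ 0 := by
  classical
  by_contra! h
  have hB := polarBilin_nondegenerate hq
  let S : Submodule k V := Submodule.span k {x, z}
  let W : Submodule k V := LinearMap.BilinForm.orthogonal (polarBilin q) S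
  have hW (w : V) (hw : w ∈ W) : q w = 0 :=
    h w (hw x (Submodule.subset_span (by simp))) (hw z (Submodule.subset_span (by simp)))
  have hle : W ≤ LinearMap.BilinForm.orthogonal (polarBilin q) W := fun w hw u hu ↦ by
    change polar q u w = 0
    simp [polar, hW _ (W.add_mem hu hw), hW _ hu, hW _ hw]
  have hS : Module.finrank k S ≤ 2 := by
    have := finrank_span_finset_le_card (R := k) ({x, z} : Finset V)
    simp only [Finset.coe_insert, Finset.coe_singleton] at this
    exact this.trans Finset.card_le_two
  have h1 := Submodule.finrank_mono hle
  have h2 : Module.finrank k W = _ := LinearMap.BilinForm.finrank_orthogonal hB S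
  rw [LinearMap.BilinForm.finrank_orthogonal hB W] at h1
  omega

theorem exists_orthogonal_polar_ne_zero [FiniteDimensional k V] (hq : ∀ v, (∀ w, polar q v w = 0) → v = 0)
    {x y : V} (hy : y ∉ Submodule.span k {x}) :
    ∃ a, polar q x a = 0 ∧ polar q y a ≠ 0 := by
  by_contra! h
  apply hy
  rw [← LinearMap.BilinForm.orthogonal_orthogonal (polarBilin_nondegenerate hq)
    (polarBilin_isRefl q) (Submodule.span k {x})]
  intro a ha
  exact (polar_comm q a y).trans (h a (ha x (Submodule.mem_span_singleton_self x)))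

/-- If `y` and `z` are not multiples of `x`, some anisotropic vector orthogonal to `x` is
orthogonal to neither `y` nor `z`. -/
theorem exists_anisotropic_polar_ne_zero [FiniteDimensional k V] [Infinite k]
    (hq : ∀ v, (∀ w, polar q v w = 0) → v = 0)
    (hV : 5 ≤ Module.finrank k V) {x y z : V} (hy : y ∉ Submodule.span k {x})
    (hz : z ∉ Submodule.span k {x}) :
    ∃ v, polar q x v = 0 ∧ q v ≠ 0 ∧ polar q y v ≠ 0 ∧ polar q z v ≠ 0 := by
  have key (P : Polynomial k) (hP : P ≠ 0) : ∃ t, P.eval t ≠ 0 := by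
    by_contra! h
    exact hP (Polynomial.funext fun t ↦ by simpa using h t)
  obtain ⟨a, hxa, hya⟩ := exists_orthogonal_polar_ne_zero hq hy
  obtain ⟨b, hxb, hzb⟩ := exists_orthogonal_polar_ne_zero hq hz
  obtain ⟨w, hxw, -, hw⟩ := exists_anisotropic_orthogonal hq hV x x
  have hlin (c d : k) (h : c ≠ 0 ∨ d ≠ 0) :
      (Polynomial.C c + Polynomial.C d * Polynomial.X) ≠ 0 := by
    intro h0
    have h1 := congrArg (Polynomial.coeff · 0) h0
    have h2 := congrArg (Polynomial.coeff · 1) h0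
    simp [Polynomial.coeff_C] at h1 h2
    tauto
  obtain ⟨s, hs⟩ := key _ (mul_ne_zero (hlin (polar q y a) (polar q y b) (.inl hya))
    (hlin (polar q z a) (polar q z b) (.inr hzb)))
  simp only [Polynomial.eval_mul, Polynomial.eval_add, Polynomial.eval_C, Polynomial.eval_X,
    mul_ne_zero_iff] at hs
  have hquad : (Polynomial.C (q (a + s • b)) + Polynomial.C (polar q (a + s • b) w) * Polynomial.X
      + Polynomial.C (q w) * Polynomial.X ^ 2) ≠ 0 := by
    intro h0
    have h2 := congrArg (Polynomial.coeff · 2) h0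
    simp at h2
    exact hw h2
  have hy0 : polar q y (a + s • b) ≠ 0 := by
    rw [polar_add_right, polar_smul_right, smul_eq_mul, mul_comm s]
    exact hs.1
  have hz0 : polar q z (a + s • b) ≠ 0 := by
    rw [polar_add_right, polar_smul_right, smul_eq_mul, mul_comm s]
    exact hs.2
  obtain ⟨t, ht⟩ := key _ (mul_ne_zero (mul_ne_zero
    (hlin (polar q y (a + s • b)) (polar q y w) (.inl hy0))
    (hlin (polar q z (a + s • b)) (polar q z w) (.inl hz0))) hquad)
  simp only [Polynomial.eval_mul, Polynomial.eval_add, Polynomial.eval_C, Polynomial.eval_X,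
    Polynomial.eval_pow, mul_ne_zero_iff] at ht
  obtain ⟨⟨h1, h2⟩, h3⟩ := ht
  refine ⟨a + s • b + t • w, ?_, ?_, ?_, ?_⟩
  · simp [polar_add_right, polar_smul_right, hxa, hxb, hxw]
  · convert h3 using 1
    rw [QuadraticMap.map_add q (a + s • b), QuadraticMap.map_smul, polar_smul_right]
    simp only [smul_eq_mul]
    ring
  · rwa [polar_add_right, polar_smul_right, smul_eq_mul, mul_comm t]
  · rwa [polar_add_right, polar_smul_right, smul_eq_mul, mul_comm t]

/-- A Witt-type transitivity statement for the stabilizer of `x` in the special orthogonal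
group. -/
theorem exists_isometry_fixing [FiniteDimensional k V] [Infinite k]
    (hq : ∀ v, (∀ w, polar q v w = 0) → v = 0)
    (hV : 5 ≤ Module.finrank k V) {x y z : V} (hy : y ∉ Submodule.span k {x})
    (hz : z ∉ Submodule.span k {x}) (hqy : q y = 0) (hqz : q z = 0)
    (hxyz : polar q x y = polar q x z) :
    ∃ f : V ≃ₗ[k] V, (∀ v, q (f v) = q v) ∧ LinearMap.det (f : V →ₗ[k] V) = 1 ∧
      f x = x ∧ f y = z := by
  obtain ⟨v, hxv, hv, hvyz⟩ : ∃ v, polar q x v = 0 ∧ q v ≠ 0 ∧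
      polar q y z - polar q v y / q v * polar q v z ≠ 0 := by
    by_cases hyz : polar q y z = 0
    · obtain ⟨v, hxv, hv, hyv, hzv⟩ := exists_anisotropic_polar_ne_zero hq hV hy hz
      rw [polar_comm] at hyv hzv
      exact ⟨v, hxv, hv, by simp [hyz, hyv, hzv, hv]⟩
    · obtain ⟨v, hxv, hzv, hv⟩ := exists_anisotropic_orthogonal hq hV x z
      rw [polar_comm] at hzv
      exact ⟨v, hxv, hv, by simpa [hzv] using hyz⟩
  obtain ⟨s, hs, hdet, hsu⟩ := exists_reflection hv
  have hsx : s x = x := by simp [hsu, polar_comm q v x, hxv]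
  have huz : polar q (s y) z ≠ 0 := by
    rwa [hsu, polar_sub_left, polar_smul_left, smul_eq_mul]
  have hxu : polar q x (s y) = polar q x z := by
    rw [hsu, polar_sub_right, polar_smul_right, hxv, smul_zero, sub_zero, hxyz]
  have hqd : q (s y - z) = -polar q (s y) z := by
    have := map_sub_smul_eq q (s y) z 1
    simpa [hs, hqy, hqz, polar_comm q z] using this
  have hd : q (s y - z) ≠ 0 := by rwa [hqd, neg_ne_zero]
  obtain ⟨r, hr, hdet', hru⟩ := exists_reflection hd
  refine ⟨s.trans r, fun u ↦ ?_, ?_, ?_, ?_⟩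
  · simp [hr, hs]
  · rw [LinearEquiv.coe_trans, LinearMap.det_comp, hdet, hdet']
    norm_num
  · simp [hsx, hru, polar_comm q _ x, hxu]
  · have : polar q (s y - z) (s y) / q (s y - z) = 1 := by
      rw [div_eq_one_iff_eq hd, hqd, polar_sub_left, polar_self, hs, hqy, polar_comm q z]
      simp
    rw [LinearEquiv.trans_apply, hru, this, one_smul, sub_sub_cancel]

end QuadraticSpace

section Projectivization

variable {k V : Type*} [Field k] [AddCommGroup V] [Module k V]

theorem Projectivization.ne_mk_iff_rep_notMem_span {x : V} (hx : x ≠ 0)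
    (p : Projectivization k V) :
    p ≠ Projectivization.mk k x hx ↔ p.rep ∉ Submodule.span k {x} := by
  conv_lhs => rw [← p.mk_rep]
  rw [ne_eq, Projectivization.mk_eq_mk_iff', Submodule.mem_span_singleton]

theorem Projectivization.exists_map_rep (f : V ≃ₗ[k] V) (p : Projectivization k V) :
    ∃ a : k, a ≠ 0 ∧
      (Projectivization.map (f : V →ₗ[k] V) f.injective p).rep = a • f p.rep := by
  have h := Projectivization.map_mk (f : V →ₗ[k] V) f.injective p.rep p.rep_nonzero
  rw [p.mk_rep] at h
  obtain ⟨a, ha⟩ := Projectivization.exists_smul_eq_mk_rep k (f p.rep)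
    (f.map_ne_zero_iff.2 p.rep_nonzero)
  exact ⟨a, a.ne_zero, by rw [h]; exact ha.symm⟩

theorem Projectivization.map_eq_of_apply_rep (f : V ≃ₗ[k] V) {p p' : Projectivization k V}
    {c : k} (h : f p.rep = c • p'.rep) :
    Projectivization.map (f : V →ₗ[k] V) f.injective p = p' := by
  conv_lhs => rw [← p.mk_rep]
  conv_rhs => rw [← p'.mk_rep]
  rw [Projectivization.map_mk, Projectivization.mk_eq_mk_iff']
  exact ⟨c, h.symm⟩

end Projectivization

section Orbits

variable {k : Type*} [Field k] {N : ℕ} {q : QuadraticForm k (Fin N → k)} {x : Fin N → k}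
  {p p' : Projectivization k (Fin N → k)}

theorem rep_of_mem_stabOrbit (hx : x ≠ 0) (h : p' ∈ stabOrbit q x p) :
    (q p'.rep = 0 ↔ q p.rep = 0) ∧ (polar q x p'.rep = 0 ↔ polar q x p.rep = 0) ∧
      (p' = Projectivization.mk k x hx ↔ p = Projectivization.mk k x hx) := by
  obtain ⟨f, hf, -, ⟨c, hc⟩, rfl⟩ := h
  have hc0 : c ≠ 0 := by
    rintro rfl
    exact hx (f.map_eq_zero_iff.1 (by simpa using hc))
  obtain ⟨a, ha, hrep⟩ := Projectivization.exists_map_rep f p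
  have hpol : c * polar q x (f p.rep) = polar q x p.rep := by
    rw [← smul_eq_mul, ← polar_smul_left, ← hc]
    simp only [polar, ← map_add, hf]
  have hfx : Projectivization.map (f : (Fin N → k) →ₗ[k] (Fin N → k)) f.injective
      (Projectivization.mk k x hx) = Projectivization.mk k x hx := by
    rw [Projectivization.map_mk, Projectivization.mk_eq_mk_iff']
    exact ⟨c, hc.symm⟩
  refine ⟨?_, ?_, ?_⟩
  · simp [hrep, QuadraticMap.map_smul, hf, ha]
  · simp [hrep, polar_smul_right, ← hpol, ha, hc0]
  · conv_lhs => rw [← hfx]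
    exact (Projectivization.map_injective _ f.injective).eq_iff

theorem mem_stabOrbit [Infinite k] (hN : 5 ≤ N)
    (hq : ∀ v, (∀ w, polar q v w = 0) → v = 0) (hx : x ≠ 0)
    (hp : q p.rep = 0) (hp' : q p'.rep = 0)
    (hpx : p ≠ Projectivization.mk k x hx) (hpx' : p' ≠ Projectivization.mk k x hx)
    (h : polar q x p.rep = 0 ↔ polar q x p'.rep = 0) :
    p' ∈ stabOrbit q x p := by
  rw [Projectivization.ne_mk_iff_rep_notMem_span] at hpx hpx'
  obtain ⟨c, hc, hcp⟩ : ∃ c : k, c ≠ 0 ∧ polar q x p.rep = c * polar q x p'.rep := by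
    by_cases h0 : polar q x p.rep = 0
    · exact ⟨1, one_ne_zero, by rw [h0, h.1 h0, mul_zero]⟩
    · have h0' := mt h.2 h0
      exact ⟨polar q x p.rep / polar q x p'.rep, div_ne_zero h0 h0', by field_simp⟩
  obtain ⟨f, hf, hdet, hfx, hfy⟩ := exists_isometry_fixing (z := c • p'.rep) hq (by simpa using hN)
    hpx (by rwa [Submodule.smul_mem_iff _ hc]) hp
    (by rw [QuadraticMap.map_smul, hp', smul_zero])
    (by rw [polar_smul_right, smul_eq_mul, hcp])
  exact ⟨f, hf, hdet, ⟨1, by rw [hfx, one_smul]⟩, Projectivization.map_eq_of_apply_rep f hfy⟩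

end Orbits

/-- The orbits of the stabilizer `G_x ⊆ SO(q)` of an isotropic projective point `[x]`
on the projective quadric `Q = {q = 0}` are exactly `{[x]}`, `H ∖ {[x]}` and `Q ∖ H`,
where `H` is the tangent hyperplane section `{[y] ∈ Q | B_q(x,y) = 0}`. -/
theorem stmt0 (k : Type*) [Field k] [IsAlgClosed k] [CharZero k]
    (n : ℕ) (hn : 3 ≤ n)
    (q : QuadraticForm k (Fin (n + 2) → k))
    (hq : ∀ v, (∀ w, polar q v w = 0) → v = 0)
    (x : Fin (n + 2) → k) (hx : x ≠ 0) (hqx : q x = 0)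
    (Qs H : Set (Projectivization k (Fin (n + 2) → k)))
    (hQs : Qs = {p | q p.rep = 0})
    (hH : H = {p | q p.rep = 0 ∧ polar q x p.rep = 0}) :
    stabOrbit q x (Projectivization.mk k x hx) = {Projectivization.mk k x hx} ∧
    (∀ p ∈ H \ {Projectivization.mk k x hx},
        stabOrbit q x p = H \ {Projectivization.mk k x hx}) ∧
    (∀ p ∈ Qs \ H, stabOrbit q x p = Qs \ H) ∧
    Qs = {Projectivization.mk k x hx} ∪ (H \ {Projectivization.mk k x hx}) ∪ (Qs \ H) := by
  have hxx : polar q x x = 0 := by rw [polar_self, hqx, smul_zero]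
  obtain ⟨a, ha⟩ := Projectivization.exists_smul_eq_mk_rep k x hx
  have hrep : q (Projectivization.mk k x hx).rep = 0 ∧
      polar q x (Projectivization.mk k x hx).rep = 0 := by
    rw [← ha, Units.smul_def, QuadraticMap.map_smul, polar_smul_right, hqx, hxx]
    simp
  subst hQs hH
  refine ⟨?_, fun p hp ↦ ?_, fun p hp ↦ ?_, ?_⟩
  · ext p'
    refine ⟨fun h ↦ (rep_of_mem_stabOrbit hx h).2.2.2 rfl, ?_⟩
    rintro rfl
    refine ⟨LinearEquiv.refl k _, fun _ ↦ rfl, by simp, ⟨1, by simp⟩, ?_⟩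
    exact Projectivization.map_mk _ _ _ _
  · ext p'
    obtain ⟨⟨hp1, hp2⟩, hp3⟩ := hp
    refine ⟨fun h ↦ ?_, fun ⟨⟨h1, h2⟩, h3⟩ ↦ ?_⟩
    · obtain ⟨e1, e2, e3⟩ := rep_of_mem_stabOrbit hx h
      exact ⟨⟨e1.2 hp1, e2.2 hp2⟩, mt e3.1 hp3⟩
    · exact mem_stabOrbit (by omega) hq hx hp1 h1 hp3 h3 (by simp [hp2, h2])
  · ext p'
    obtain ⟨hp1, hp2⟩ := hp
    refine ⟨fun h ↦ ?_, fun ⟨h1, h2⟩ ↦ ?_⟩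
    · obtain ⟨e1, e2, -⟩ := rep_of_mem_stabOrbit hx h
      exact ⟨e1.2 hp1, fun h' ↦ hp2 ⟨hp1, e2.1 h'.2⟩⟩
    · refine mem_stabOrbit (by omega) hq hx hp1 h1 ?_ ?_
        (iff_of_false (fun h ↦ hp2 ⟨hp1, h⟩) fun h ↦ h2 ⟨h1, h⟩)
      · rintro rfl
        exact hp2 hrep
      · rintro rfl
        exact h2 hrep
  · ext p
    by_cases hpx : p = Projectivization.mk k x hx
    · simp [hpx, hrep]
    · simp [hpx]
      tauto
end

section
/- Let K be a field and let a ≥ 1 and n ≥ 1 be integers. Let M = (m_{ij})_{0 ≤ i,j ≤ n} be an (n+1)×(n+1) matrix with entries m_{ij} ∈ K[t], and suppose that in the matrix ring over the rational function field K(t) one has M(1/t) · D = D · M(t), where D = diag(1, …, 1, t^{−a}) and M(1/t) denotes the matrix obtained by substituting 1/t for t in every entry. Then: (i) m_{ij} is a constant polynomial for all 0 ≤ i, j ≤ n−1 and also m_{nn} is constant; (ii) m_{in} = 0 for all 0 ≤ i ≤ n−1; and (iii) m_{nj} has degree at most a for all 0 ≤ j ≤ n−1. -/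
open Polynomial in
/-- Substituting `1/t` in a polynomial and clearing denominators gives the reversed polynomial. -/
lemma RatFunc.aeval_inv_X_mul_X_pow_natDegree {K : Type*} [Field K] (p : K[X]) :
    aeval (RatFunc.X : RatFunc K)⁻¹ p * RatFunc.X ^ p.natDegree =
      algebraMap K[X] (RatFunc K) p.reverse := by
  let _ : Invertible (RatFunc.X : RatFunc K)⁻¹ :=
    invertibleOfNonzero (inv_ne_zero RatFunc.X_ne_zero)
  have h := eval₂_reverse_mul_pow (algebraMap K (RatFunc K)) (RatFunc.X : RatFunc K)⁻¹ p
  rw [invOf_eq_inv, inv_inv, ← aeval_def, ← aeval_def, ← RatFunc.algebraMap_X,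
    aeval_algebraMap_apply, aeval_X_left_apply, RatFunc.algebraMap_X] at h
  rw [← h, mul_assoc, ← mul_pow, inv_mul_cancel₀ RatFunc.X_ne_zero, one_pow, mul_one]

open Polynomial in
/-- If `p ≠ 0` and `p(1/t) * t ^ b = p(t) * t ^ c`, then `deg p + c ≤ b`. -/
lemma RatFunc.natDegree_add_le_of_aeval_inv_X {K : Type*} [Field K] {p : K[X]} (hp : p ≠ 0)
    {b c : ℕ} (h : aeval (RatFunc.X : RatFunc K)⁻¹ p * RatFunc.X ^ b =
      algebraMap K[X] (RatFunc K) p * RatFunc.X ^ c) :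
    p.natDegree + c ≤ b := by
  have key : p.reverse * Polynomial.X ^ b = p * Polynomial.X ^ (p.natDegree + c) := by
    apply RatFunc.algebraMap_injective K
    simp only [map_mul, map_pow, RatFunc.algebraMap_X, ← aeval_inv_X_mul_X_pow_natDegree, pow_add]
    linear_combination RatFunc.X ^ p.natDegree * h
  have hdeg := congrArg natDegree key
  rw [natDegree_mul_X_pow _ (by simpa using hp), natDegree_mul_X_pow _ hp] at hdeg
  have := reverse_natDegree_le p
  omega

/-- The gluing condition `M(1/t)·D = D·M(t)`, `D = diag(1,…,1,t^{−a})`, for a matrix of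
polynomials forces: the upper-left `n × n` block and the lower-right entry to be constant,
the upper-right column (above the last entry) to vanish, and the remaining entries of the
last row to have degree at most `a`. -/
theorem stmt3 (K : Type*) [Field K] (a n : ℕ) (ha : 1 ≤ a) (hn : 1 ≤ n)
    (M : Matrix (Fin (n + 1)) (Fin (n + 1)) (Polynomial K))
    (hM : (M.map fun p => Polynomial.aeval ((RatFunc.X : RatFunc K)⁻¹) p) *
          Matrix.diagonal (fun i : Fin (n + 1) =>
            if (i : ℕ) = n then ((RatFunc.X : RatFunc K) ^ a)⁻¹ else 1) =
          Matrix.diagonal (fun i : Fin (n + 1) =>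
            if (i : ℕ) = n then ((RatFunc.X : RatFunc K) ^ a)⁻¹ else 1) *
          (M.map fun p => algebraMap (Polynomial K) (RatFunc K) p)) :
    (∀ i j : Fin (n + 1), (i : ℕ) < n → (j : ℕ) < n → ∃ c : K, M i j = Polynomial.C c) ∧
    (∃ c : K, M (Fin.last n) (Fin.last n) = Polynomial.C c) ∧
    (∀ i : Fin (n + 1), (i : ℕ) < n → M i (Fin.last n) = 0) ∧
    (∀ j : Fin (n + 1), (j : ℕ) < n → (M (Fin.last n) j).natDegree ≤ a) := by
  have hX : (RatFunc.X : RatFunc K) ≠ 0 := RatFunc.X_ne_zero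
  have hentry (i j : Fin (n + 1)) := congrFun₂ hM i j
  simp only [Matrix.mul_diagonal, Matrix.diagonal_mul, Matrix.map_apply] at hentry
  have hconst (p : Polynomial K) (h : Polynomial.aeval (RatFunc.X : RatFunc K)⁻¹ p =
      algebraMap (Polynomial K) (RatFunc K) p) : ∃ c : K, p = Polynomial.C c := by
    rcases eq_or_ne p 0 with rfl | hp
    · exact ⟨0, by simp⟩
    · have := RatFunc.natDegree_add_le_of_aeval_inv_X hp (b := 0) (c := 0) (by simpa using h)
      exact ⟨_, Polynomial.eq_C_of_natDegree_le_zero (by omega)⟩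
  refine ⟨fun i j hi hj => hconst _ ?_, hconst _ ?_, fun i hi => ?_, fun j hj => ?_⟩
  · simpa [hi.ne, hj.ne] using hentry i j
  · have h := hentry (Fin.last n) (Fin.last n)
    rw [Fin.val_last, if_pos rfl, mul_comm] at h
    exact mul_left_cancel₀ (inv_ne_zero (pow_ne_zero a hX)) h
  · by_contra hp
    have h := hentry i (Fin.last n)
    rw [Fin.val_last, if_pos rfl, if_neg hi.ne, one_mul,
      mul_inv_eq_iff_eq_mul₀ (pow_ne_zero a hX)] at h
    have := RatFunc.natDegree_add_le_of_aeval_inv_X hp (b := 0) (c := a) (by simpa using h)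
    omega
  · rcases eq_or_ne (M (Fin.last n) j) 0 with hp | hp
    · simp [hp]
    have h := hentry (Fin.last n) j
    rw [Fin.val_last, if_pos rfl, if_neg hj.ne, mul_one,
      eq_inv_mul_iff_mul_eq₀ (pow_ne_zero a hX), mul_comm] at h
    exact RatFunc.natDegree_add_le_of_aeval_inv_X hp (c := 0) (by simpa using h)
end

section
/- Let k be an algebraically closed field of characteristic 0, let n ≥ 3 and a ≥ 1 be integers, and let g ∈ k[t₀,t₁] be a nonzero homogeneous polynomial of degree 2a. In the polynomial ring k[t₀,t₁][x₀,…,xₙ] set q_g = x₁² − x₀x₂ + x₃² + ⋯ + x_{n−1}² + g·xₙ² and q₀ = x₁² − x₀x₂ + x₃² + ⋯ + x_{n−1}². Let α be the (n+1)×(n+1) matrix over k[t₀,t₁] whose upper-left n×n block is a constant invertible matrix M ∈ GL_n(k), whose upper-right column is zero, whose lower-left row is (f₀, …, f_{n−1}) with each fᵢ ∈ k[t₀,t₁] homogeneous of degree a, and whose lower-right entry is 1. Then there exists λ ∈ k ∖ {0} such that q_g(α·(x₀,…,xₙ)) = λ · q_g(x₀,…,xₙ) identically if and only if f₀ = ⋯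 = f_{n−1} = 0 and M preserves q₀ (i.e. q₀(M·(x₀,…,x_{n−1})) = q₀(x₀,…,x_{n−1}) identically); and in that case necessarily λ = 1. -/
/-- The quadratic form `q₀(x) = x₁² − x₀x₂ + x₃² + ⋯ + x_{n−1}²` on `kⁿ` (`n ≥ 3`). -/
def q0 {k : Type*} [Field k] {n : ℕ} (hn : 3 ≤ n) (x : Fin n → k) : k :=
  x ⟨1, by omega⟩ ^ 2 - x ⟨0, by omega⟩ * x ⟨2, by omega⟩ +
    ∑ i : Fin n, if 3 ≤ (i : ℕ) then x i ^ 2 else 0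

/-- The value at `(t, x)` of the defining polynomial
`q_g = x₁² − x₀x₂ + x₃² + ⋯ + x_{n−1}² + g(t₀,t₁)·xₙ²` of the Umemura quadric fibration. -/
noncomputable def qgVal {k : Type*} [Field k] {n : ℕ} (hn : 3 ≤ n)
    (g : MvPolynomial (Fin 2) k) (t : Fin 2 → k) (x : Fin (n + 1) → k) : k :=
  q0 hn (fun i : Fin n => x i.castSucc) + MvPolynomial.eval t g * x (Fin.last n) ^ 2

/-- The action on coordinates of the block matrix `α` with upper-left block `M ∈ GL_n(k)`,
zero upper-right column, lower-left row `(f₀,…,f_{n−1})` and lower-right entry `1`,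
evaluated at the parameter `t`. -/
noncomputable def blockAct {k : Type*} [Field k] {n : ℕ} (M : Matrix (Fin n) (Fin n) k)
    (f : Fin n → MvPolynomial (Fin 2) k) (t : Fin 2 → k) (x : Fin (n + 1) → k) :
    Fin (n + 1) → k := fun i =>
  if h : (i : ℕ) < n then ∑ j : Fin n, M ⟨i, h⟩ j * x j.castSucc
  else (∑ j : Fin n, MvPolynomial.eval t (f j) * x j.castSucc) + x (Fin.last n)

lemma qgVal_blockAct {k : Type*} [Field k] {n : ℕ} (hn : 3 ≤ n)
    (g : MvPolynomial (Fin 2) k) (M : Matrix (Fin n) (Fin n) k)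
    (f : Fin n → MvPolynomial (Fin 2) k) (t : Fin 2 → k) (x : Fin (n + 1) → k) :
    qgVal hn g t (blockAct M f t x) = q0 hn (M.mulVec fun j => x j.castSucc) +
      MvPolynomial.eval t g *
        ((∑ j, MvPolynomial.eval t (f j) * x j.castSucc) + x (Fin.last n)) ^ 2 := by
  simp only [qgVal, blockAct, Fin.val_castSucc, Fin.is_lt, dite_true, Fin.val_last, lt_irrefl,
    dite_false]
  rfl

lemma q0_zero {k : Type*} [Field k] {n : ℕ} (hn : 3 ≤ n) : q0 hn (0 : Fin n → k) = 0 := by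
  simp [q0]

/-- A scaling identity for `q_g` under `α`, in terms of the first `n` entries `y` and the last
entry `s`. -/
lemma scaling_snoc {k : Type*} [Field k] {n : ℕ} {hn : 3 ≤ n}
    {g : MvPolynomial (Fin 2) k} {M : Matrix (Fin n) (Fin n) k}
    {f : Fin n → MvPolynomial (Fin 2) k} {lam : k}
    (h : ∀ (t : Fin 2 → k) (x : Fin (n + 1) → k),
      qgVal hn g t (blockAct M f t x) = lam * qgVal hn g t x)
    (t : Fin 2 → k) (y : Fin n → k) (s : k) :
    q0 hn (M.mulVec y) +
        MvPolynomial.eval t g * ((∑ j, MvPolynomial.eval t (f j) * y j) + s) ^ 2 =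
      lam * (q0 hn y + MvPolynomial.eval t g * s ^ 2) := by
  have := h t (Fin.snoc (α := fun _ => k) y s)
  rw [qgVal_blockAct] at this
  simpa [qgVal] using this

lemma scaling_factor_eq_one {k : Type*} [Field k] [Infinite k] {n : ℕ} {hn : 3 ≤ n}
    {g : MvPolynomial (Fin 2) k} (hg0 : g ≠ 0) {M : Matrix (Fin n) (Fin n) k}
    {f : Fin n → MvPolynomial (Fin 2) k} {lam : k}
    (h : ∀ (t : Fin 2 → k) (x : Fin (n + 1) → k),
      qgVal hn g t (blockAct M f t x) = lam * qgVal hn g t x) : lam = 1 := by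
  obtain ⟨t, ht⟩ : ∃ t, MvPolynomial.eval t g ≠ 0 := by
    by_contra! hc
    exact hg0 (MvPolynomial.funext fun t => by simpa using hc t)
  have := scaling_snoc h t 0 1
  simp only [Matrix.mulVec_zero, q0_zero, Pi.zero_apply, mul_zero, Finset.sum_const_zero,
    zero_add, one_pow, mul_one] at this
  exact mul_right_cancel₀ ht (by rw [one_mul, ← this])

lemma lower_row_eq_zero {k : Type*} [Field k] [CharZero k] {n : ℕ} {hn : 3 ≤ n}
    {g : MvPolynomial (Fin 2) k} (hg0 : g ≠ 0) {M : Matrix (Fin n) (Fin n) k}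
    {f : Fin n → MvPolynomial (Fin 2) k} {lam : k}
    (h : ∀ (t : Fin 2 → k) (x : Fin (n + 1) → k),
      qgVal hn g t (blockAct M f t x) = lam * qgVal hn g t x) (j : Fin n) : f j = 0 := by
  have hgf : g * f j = 0 := by
    refine MvPolynomial.funext fun t => ?_
    have hpos := scaling_snoc h t (Pi.single j 1) 1
    have hneg := scaling_snoc h t (Pi.single j 1) (-1)
    simp only [Pi.single_apply, mul_ite, mul_one, mul_zero, Finset.sum_ite_eq',
      Finset.mem_univ, if_true] at hpos hneg
    rw [map_mul, map_zero]
    linear_combination (hpos - hneg) / 4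
  exact (mul_eq_zero.mp hgf).resolve_left hg0

/-- The block matrix `α` rescales the equation `q_g` by some nonzero `λ` identically
if and only if `f₀ = ⋯ = f_{n−1} = 0` and `M` preserves `q₀`; and in that case `λ = 1`. -/
theorem stmt4 (k : Type*) [Field k] [IsAlgClosed k] [CharZero k]
    (n a : ℕ) (hn : 3 ≤ n) (ha : 1 ≤ a)
    (g : MvPolynomial (Fin 2) k) (hg0 : g ≠ 0) (hg : g.IsHomogeneous (2 * a))
    (M : Matrix (Fin n) (Fin n) k) (hM : IsUnit M)
    (f : Fin n → MvPolynomial (Fin 2) k) (hf : ∀ j, (f j).IsHomogeneous a) :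
    ((∃ lam : k, lam ≠ 0 ∧
        ∀ (t : Fin 2 → k) (x : Fin (n + 1) → k),
          qgVal hn g t (blockAct M f t x) = lam * qgVal hn g t x) ↔
      ((∀ j, f j = 0) ∧ ∀ y : Fin n → k, q0 hn (M.mulVec y) = q0 hn y)) ∧
    (∀ lam : k, lam ≠ 0 →
      (∀ (t : Fin 2 → k) (x : Fin (n + 1) → k),
        qgVal hn g t (blockAct M f t x) = lam * qgVal hn g t x) → lam = 1) := by
  refine ⟨⟨?_, ?_⟩, fun lam _ h => scaling_factor_eq_one hg0 h⟩
  · rintro ⟨lam, -, h⟩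
    have hf0 := lower_row_eq_zero hg0 h
    refine ⟨hf0, fun y => ?_⟩
    simpa [hf0, scaling_factor_eq_one hg0 h] using scaling_snoc h 0 y 0
  · rintro ⟨hf0, hq⟩
    refine ⟨1, one_ne_zero, fun t x => ?_⟩
    rw [qgVal_blockAct, hq]
    simp [hf0, qgVal]
end

section
/- Let k be a field of characteristic 0, let n ≥ 3 be an integer, and let γ ∈ k[t]. Consider the polynomial F = x₁² − x₀x₂ + x₃² + ⋯ + x_{n−1}² + γ(t) in the n+1 variables x₀, …, x_{n−1}, t. Then a point p = (v₀, …, v_{n−1}, s) ∈ k^{n+1} satisfies F(p) = 0 together with the vanishing at p of all n+1 partial derivatives of F if and only if v₀ = ⋯ = v_{n−1} = 0 and s is a root of γ of multiplicity at least 2, i.e. γ(s) = γ'(s) = 0. -/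
/-- Evaluating a univariate polynomial in one of the variables. -/
lemma MvPolynomial.eval_aeval_X {σ R : Type*} [CommSemiring R] (p : σ → R) (l : σ)
    (γ : Polynomial R) :
    MvPolynomial.eval p (Polynomial.aeval (MvPolynomial.X l) γ) = Polynomial.eval (p l) γ := by
  induction γ using Polynomial.induction_on' with
  | add f g hf hg => simp [hf, hg]
  | monomial m a => simp [Polynomial.aeval_monomial, MvPolynomial.algebraMap_eq]

/-- The partial derivatives of a univariate polynomial in one of the variables. -/
lemma MvPolynomial.eval_pderiv_aeval_X {σ R : Type*} [DecidableEq σ] [CommSemiring R]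
    (p : σ → R) (l j : σ) (γ : Polynomial R) :
    MvPolynomial.eval p (MvPolynomial.pderiv j (Polynomial.aeval (MvPolynomial.X l) γ)) =
      if l = j then Polynomial.eval (p l) (Polynomial.derivative γ) else 0 := by
  rw [Derivation.map_aeval, smul_eq_mul, map_mul, MvPolynomial.eval_aeval_X,
    MvPolynomial.pderiv_X, Pi.single_apply]
  split_ifs <;> simp_all

/-- The partial derivatives of a sum of squares of variables. -/
lemma MvPolynomial.eval_pderiv_sum_ite_X_sq {σ R : Type*} [Fintype σ] [DecidableEq σ]
    [CommSemiring R] (P : σ → Prop) [DecidablePred P] (p : σ → R) (j : σ) :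
    MvPolynomial.eval p (MvPolynomial.pderiv j
      (∑ i : σ, if P i then (MvPolynomial.X i : MvPolynomial σ R) ^ 2 else 0)) =
      if P j then 2 * p j else 0 := by
  rw [map_sum, map_sum, Finset.sum_eq_single j]
  · split_ifs <;> simp
  · intro i _ hij
    split_ifs <;> simp [MvPolynomial.pderiv_X, hij]
  · simp

/-- The singular points of the affine hypersurface
`{x₁² − x₀x₂ + x₃² + ⋯ + x_{n−1}² + γ(t) = 0} ⊂ 𝔸^{n+1}` are exactly the points
`(0, …, 0, s)` with `s` a root of `γ` of multiplicity at least `2`. -/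
theorem stmt7 (k : Type*) [Field k] [CharZero k] (n : ℕ) (hn : 3 ≤ n)
    (γ : Polynomial k) (F : MvPolynomial (Fin (n + 1)) k)
    (hF : F = MvPolynomial.X ⟨1, by omega⟩ ^ 2 -
        MvPolynomial.X ⟨0, by omega⟩ * MvPolynomial.X ⟨2, by omega⟩ +
        (∑ i : Fin (n + 1), if 3 ≤ (i : ℕ) ∧ (i : ℕ) < n then MvPolynomial.X i ^ 2 else 0) +
        Polynomial.aeval (MvPolynomial.X (Fin.last n)) γ) :
    ∀ p : Fin (n + 1) → k,
      (MvPolynomial.eval p F = 0 ∧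
        ∀ i : Fin (n + 1), MvPolynomial.eval p (MvPolynomial.pderiv i F) = 0) ↔
      ((∀ i : Fin (n + 1), (i : ℕ) < n → p i = 0) ∧
        Polynomial.eval (p (Fin.last n)) γ = 0 ∧
        Polynomial.eval (p (Fin.last n)) (Polynomial.derivative γ) = 0) := by
  intro p
  have hval : MvPolynomial.eval p F = p ⟨1, by omega⟩ ^ 2 - p ⟨0, by omega⟩ * p ⟨2, by omega⟩ +
      (∑ i : Fin (n + 1), if 3 ≤ (i : ℕ) ∧ (i : ℕ) < n then p i ^ 2 else 0) +
      Polynomial.eval (p (Fin.last n)) γ := by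
    simp [hF, MvPolynomial.eval_aeval_X, apply_ite (MvPolynomial.eval p)]
  have hder (j : Fin (n + 1)) : MvPolynomial.eval p (MvPolynomial.pderiv j F) =
      (if (j : ℕ) = 1 then 2 * p ⟨1, by omega⟩ else 0) -
      ((if (j : ℕ) = 2 then p ⟨0, by omega⟩ else 0) +
        if (j : ℕ) = 0 then p ⟨2, by omega⟩ else 0) +
      (if 3 ≤ (j : ℕ) ∧ (j : ℕ) < n then 2 * p j else 0) +
      if (j : ℕ) = n then Polynomial.eval (p (Fin.last n)) (Polynomial.derivative γ) else 0 := by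
    rw [hF]
    simp only [map_add, map_sub, MvPolynomial.eval_pderiv_aeval_X,
      MvPolynomial.eval_pderiv_sum_ite_X_sq]
    simp only [MvPolynomial.pderiv_pow, MvPolynomial.pderiv_mul, MvPolynomial.pderiv_X,
      Pi.single_apply, Fin.ext_iff, map_add, map_mul, map_pow, apply_ite (MvPolynomial.eval p),
      MvPolynomial.eval_X, map_one, map_zero, Fin.val_last, @eq_comm ℕ _ (j : ℕ)]
    simp [add_comm]
  simp only [hval, hder]
  constructor
  · rintro ⟨h, hd⟩
    have hzero (i : Fin (n + 1)) (hi : (i : ℕ) < n) : p i = 0 := by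
      obtain ⟨i, hi'⟩ := i
      simp only at hi
      obtain rfl | rfl | rfl | h3 : i = 0 ∨ i = 1 ∨ i = 2 ∨ 3 ≤ i := by omega
      · simpa [show 2 ≠ n by omega] using hd ⟨2, by omega⟩
      · simpa [show 1 ≠ n by omega] using hd ⟨1, by omega⟩
      · simpa [show 0 ≠ n by omega] using hd ⟨0, by omega⟩
      · simpa [h3, hi, hi.ne, show i ≠ 0 by omega, show i ≠ 1 by omega,
          show i ≠ 2 by omega] using hd ⟨i, hi'⟩
    refine ⟨hzero, ?_, ?_⟩
    · rw [Finset.sum_eq_zero fun i _ => by split_ifs with hi <;> simp [hzero i, *],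
        hzero ⟨1, _⟩ (by simp; omega), hzero ⟨0, _⟩ (by simp; omega)] at h
      simpa using h
    · simpa [show n ≠ 0 by omega, show n ≠ 1 by omega, show n ≠ 2 by omega] using hd (Fin.last n)
  · rintro ⟨hzero, h, hd⟩
    have h0 := hzero ⟨0, by omega⟩ (by simp; omega)
    have h1 := hzero ⟨1, by omega⟩ (by simp; omega)
    have h2 := hzero ⟨2, by omega⟩ (by simp; omega)
    refine ⟨?_, fun j => ?_⟩
    · rw [Finset.sum_eq_zero fun i _ => by split_ifs with hi <;> simp [hzero i, *]]
      simp only [h0, h1, h]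
      simp
    · have hj : (if 3 ≤ (j : ℕ) ∧ (j : ℕ) < n then 2 * p j else 0) = 0 := by
        split_ifs with hj <;> simp [hzero j, *]
      simp only [hj, h0, h1, h2, hd]
      simp
end

section
/- Let k be an algebraically closed field of characteristic 0 and let m ≥ 3 be an integer. Let B ∈ GL_m(k) be an invertible matrix such that for every v ∈ k^m with v₁² + ⋯ + v_m² = 0 one also has (Bv)₁² + ⋯ + (Bv)_m² = 0. Then there exists λ ∈ k ∖ {0} such that Bᵀ B = λ·I_m. -/
/-- If `c ^ 2 = -1`, a symmetric bilinear form vanishing on the isotropic vectors `eᵢ ± c eⱼ` of the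
standard quadratic form is off-diagonally zero and has constant diagonal. -/
theorem Matrix.IsSymm.apply_eq_of_isotropic {k n : Type*} [Field k] [NeZero (2 : k)]
    [Fintype n] [DecidableEq n] {S : Matrix n n k} (hS : S.IsSymm) {c : k} (hc : c ^ 2 = -1)
    (h : ∀ v : n → k, v ⬝ᵥ v = 0 → v ⬝ᵥ S.mulVec v = 0) {i j : n} (hij : i ≠ j) :
    S i j = 0 ∧ S i i = S j j := by
  have key (d : k) (hd : d ^ 2 = -1) : S i i - S j j + 2 * d * S i j = 0 := by
    have hv := h (Pi.single i 1 + d • Pi.single j 1) (by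
      simp [hij, hij.symm]
      linear_combination hd)
    simp [Matrix.mulVec_add, Matrix.mulVec_smul] at hv
    linear_combination hv - S j j * hd - d * hS.apply i j
  have hp := key c hc
  have hn := key (-c) (by linear_combination hc)
  have h2 : (2 : k) ≠ 0 := NeZero.ne 2
  have hc0 : c ≠ 0 := by
    rintro rfl
    simp at hc
  have hz : S i j = 0 := by
    have : 2 * 2 * c * S i j = 0 := by linear_combination hp - hn
    simpa [h2, hc0] using this
  exact ⟨hz, by linear_combination hp - 2 * c * hz⟩

/-- Over an algebraically closed field of characteristic `0`, an invertible matrix `B`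
preserving the affine cone `{Σ vᵢ² = 0}` in at least `3` variables satisfies
`Bᵀ B = λ·I` for some nonzero scalar `λ`. -/
theorem stmt8 (k : Type*) [Field k] [IsAlgClosed k] [CharZero k]
    (m : ℕ) (hm : 3 ≤ m)
    (B : Matrix (Fin m) (Fin m) k) (hB : IsUnit B)
    (h : ∀ v : Fin m → k, (∑ i, v i ^ 2) = 0 → (∑ i, (B.mulVec v) i ^ 2) = 0) :
    ∃ lam : k, lam ≠ 0 ∧ B.transpose * B = lam • (1 : Matrix (Fin m) (Fin m) k) := by
  obtain ⟨c, hc⟩ := IsAlgClosed.exists_pow_nat_eq (-1 : k) (n := 2) two_pos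
  have hS : (B.transpose * B).IsSymm := Matrix.isSymm_transpose_mul_self B
  have hoff {i j : Fin m} (hij : i ≠ j) := hS.apply_eq_of_isotropic hc (fun v hv => by
    rw [← Matrix.mulVec_mulVec, Matrix.dotProduct_mulVec, Matrix.vecMul_transpose]
    simpa [dotProduct, sq] using h v (by simpa [dotProduct, sq] using hv)) hij
  let o : Fin m := ⟨0, by lia⟩
  have heq : B.transpose * B = (B.transpose * B) o o • (1 : Matrix (Fin m) (Fin m) k) := by
    ext i j
    rcases eq_or_ne i j with rfl | hij
    · rcases eq_or_ne i o with rfl | hio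
      · simp
      · simpa using (hoff hio).2
    · simpa [hij] using (hoff hij).1
  refine ⟨(B.transpose * B) o o, fun h0 => ?_, heq⟩
  have hu : IsUnit (B.transpose * B) := (B.isUnit_transpose.mpr hB).mul hB
  have : Nonempty (Fin m) := ⟨o⟩
  rw [heq, h0, zero_smul] at hu
  exact not_isUnit_zero hu
end

section
/- Let k be an algebraically closed field of characteristic 0 and n ≥ 3 an integer. Let Z = {v ∈ k^{n+1} : v₀ = 0 and v₁² + ⋯ + vₙ² = 0}. Then an invertible matrix A ∈ GL_{n+1}(k) satisfies A(Z) ⊆ Z if and only if A has the block form: its first row is (α, 0, …, 0) with α ≠ 0, its lower-left column (entries A_{i0} for 1 ≤ i ≤ n) is arbitrary, and its lower-right n×n block B satisfies Bᵀ B = λ·I_n for some λ ∈ k ∖ {0}. -/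
open Matrix

/-- A linear functional vanishing on all isotropic vectors of the standard quadratic form is zero,
provided there are at least two coordinates. -/
lemma eq_zero_of_dotProduct_isotropic {k ι : Type*} [Field k] [IsAlgClosed k] [CharZero k]
    [Fintype ι] [DecidableEq ι] [Nontrivial ι] (a : ι → k)
    (h : ∀ w : ι → k, w ⬝ᵥ w = 0 → a ⬝ᵥ w = 0) : a = 0 := by
  obtain ⟨c, hc⟩ := IsAlgClosed.exists_pow_nat_eq (-1 : k) two_pos
  have key : ∀ i j, i ≠ j → ∀ d : k, d ^ 2 = -1 → a i + d * a j = 0 := by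
    intro i j hij d hd
    have := h (Pi.single i 1 + d • Pi.single j 1) (by
      simp [hij, hij.symm]
      linear_combination hd)
    simpa [dotProduct_add] using this
  funext i
  obtain ⟨j, hj⟩ := exists_ne i
  have h1 := key i j hj.symm c hc
  have h2 := key i j hj.symm (-c) (by simpa using hc)
  have h3 : 2 * a i = 0 := by linear_combination h1 + h2
  simpa using h3

/-- A matrix mapping isotropic vectors of the standard quadratic form to isotropic vectors
has pairwise orthogonal columns of equal square length. -/
lemma exists_transpose_mul_self_eq_smul_one {k m ι : Type*} [Field k] [IsAlgClosed k] [CharZero k]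
    [Fintype m] [Fintype ι] [DecidableEq ι] [Nonempty ι] (B : Matrix m ι k)
    (h : ∀ w : ι → k, w ⬝ᵥ w = 0 → (B *ᵥ w) ⬝ᵥ (B *ᵥ w) = 0) :
    ∃ c : k, Bᵀ * B = c • (1 : Matrix ι ι k) := by
  obtain ⟨c, hc⟩ := IsAlgClosed.exists_pow_nat_eq (-1 : k) two_pos
  have hc0 : c ≠ 0 := by
    rintro rfl
    simp at hc
  have key : ∀ i j, i ≠ j → ∀ d : k, d ^ 2 = -1 →
      B.col i ⬝ᵥ B.col i - B.col j ⬝ᵥ B.col j + 2 * d * (B.col i ⬝ᵥ B.col j) = 0 := by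
    intro i j hij d hd
    have := h (Pi.single i 1 + d • Pi.single j 1) (by
      simp [hij, hij.symm]
      linear_combination hd)
    simp only [mulVec_add, mulVec_smul, mulVec_single_one, add_dotProduct, dotProduct_add,
      smul_dotProduct, dotProduct_smul, smul_eq_mul, dotProduct_comm (B.col j) (B.col i)] at this
    linear_combination this - (B.col j ⬝ᵥ B.col j) * hd
  have diag : ∀ i j, B.col i ⬝ᵥ B.col i = B.col j ⬝ᵥ B.col j := by
    intro i j
    by_cases hij : i = j
    · rw [hij]
    have h1 := key i j hij c hc
    have h2 := key i j hij (-c) (by simpa using hc)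
    linear_combination (h1 + h2) / 2
  obtain ⟨i₀⟩ := ‹Nonempty ι›
  refine ⟨B.col i₀ ⬝ᵥ B.col i₀, ?_⟩
  ext i j
  change B.col i ⬝ᵥ B.col j = _
  by_cases hij : i = j
  · subst hij
    simpa using diag i i₀
  · have h1 := key i j hij c hc
    rw [diag i j, sub_self, zero_add] at h1
    simpa [hij, hc0] using h1

/-- A matrix with `Bᵀ * B = c • 1` scales the standard quadratic form by `c`. -/
lemma mulVec_dotProduct_mulVec_of_transpose_mul_self {k m ι : Type*} [CommRing k]
    [Fintype m] [Fintype ι] [DecidableEq ι] {B : Matrix m ι k} {c : k}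
    (hB : Bᵀ * B = c • (1 : Matrix ι ι k)) (w : ι → k) :
    (B *ᵥ w) ⬝ᵥ (B *ᵥ w) = c * (w ⬝ᵥ w) := by
  rw [dotProduct_mulVec, ← mulVec_transpose, mulVec_mulVec, hB, smul_mulVec, one_mulVec,
    smul_dotProduct, smul_eq_mul]

/-- If the first row of `A` vanishes off the diagonal, `A` is block lower triangular. -/
lemma det_eq_mul_det_submatrix_succ {k : Type*} [CommRing k] {n : ℕ}
    (A : Matrix (Fin (n + 1)) (Fin (n + 1)) k) (hrow : ∀ j : Fin n, A 0 j.succ = 0) :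
    A.det = A 0 0 * (A.submatrix Fin.succ Fin.succ).det := by
  simp [det_succ_row_zero, Fin.sum_univ_succ, hrow]

/-- An invertible matrix `A` preserves the affine cone
`Z = {v₀ = 0, v₁² + ⋯ + vₙ² = 0} ⊂ k^{n+1}` if and only if its first row is `(α, 0, …, 0)`
with `α ≠ 0` and its lower-right `n × n` block `B` satisfies `Bᵀ B = λ·I` for some `λ ≠ 0`
(the lower-left column being arbitrary). -/
theorem stmt9 (k : Type*) [Field k] [IsAlgClosed k] [CharZero k]
    (n : ℕ) (hn : 3 ≤ n)
    (A : Matrix (Fin (n + 1)) (Fin (n + 1)) k) (hA : IsUnit A) :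
    (∀ v : Fin (n + 1) → k,
        (v 0 = 0 ∧ (∑ i : Fin (n + 1), if 1 ≤ (i : ℕ) then v i ^ 2 else 0) = 0) →
        (A.mulVec v 0 = 0 ∧
          (∑ i : Fin (n + 1), if 1 ≤ (i : ℕ) then (A.mulVec v) i ^ 2 else 0) = 0)) ↔
    (A 0 0 ≠ 0 ∧ (∀ j : Fin (n + 1), j ≠ 0 → A 0 j = 0) ∧
      ∃ lam : k, lam ≠ 0 ∧
        (Matrix.of fun i j : Fin n => A i.succ j.succ).transpose *
            (Matrix.of fun i j : Fin n => A i.succ j.succ) =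
          lam • (1 : Matrix (Fin n) (Fin n) k)) := by
  set B : Matrix (Fin n) (Fin n) k := of fun i j : Fin n => A i.succ j.succ with hB
  have hsum : ∀ v : Fin (n + 1) → k,
      (∑ i : Fin (n + 1), if 1 ≤ (i : ℕ) then v i ^ 2 else 0) = vecTail v ⬝ᵥ vecTail v := by
    intro v
    simp [Fin.sum_univ_succ, dotProduct, vecTail, sq]
  have htail : ∀ v : Fin (n + 1) → k, v 0 = 0 → vecTail (A *ᵥ v) = B *ᵥ vecTail v := by
    intro v hv
    funext i
    simp [hB, vecTail, mulVec, dotProduct, Fin.sum_univ_succ, hv]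
  have hhead : ∀ v : Fin (n + 1) → k, v 0 = 0 →
      (A *ᵥ v) 0 = (fun j : Fin n => A 0 j.succ) ⬝ᵥ vecTail v := by
    intro v hv
    simp [vecTail, mulVec, dotProduct, Fin.sum_univ_succ, hv]
  simp only [hsum]
  constructor
  · intro h
    have : Nontrivial (Fin n) := Fin.nontrivial_iff_two_le.mpr (by lia)
    have hrow : (fun j : Fin n => A 0 j.succ) = 0 := by
      refine eq_zero_of_dotProduct_isotropic _ fun w hw => ?_
      simpa [hhead (vecCons 0 w) rfl] using (h (vecCons 0 w) (by simpa using hw)).1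
    obtain ⟨c, hc⟩ := exists_transpose_mul_self_eq_smul_one B fun w hw => by
      simpa [htail (vecCons 0 w) rfl] using (h (vecCons 0 w) (by simpa using hw)).2
    have hdet : A.det ≠ 0 := ((isUnit_iff_isUnit_det A).mp hA).ne_zero
    rw [det_eq_mul_det_submatrix_succ A (congrFun hrow)] at hdet
    refine ⟨left_ne_zero_of_mul hdet, fun j hj => ?_, c, ?_, hc⟩
    · obtain ⟨i, rfl⟩ := Fin.exists_succ_eq.mpr hj
      exact congrFun hrow i
    · rintro rfl
      have hBdet : B.det ≠ 0 := right_ne_zero_of_mul hdet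
      have := congrArg det hc
      simp [hBdet] at this
  · rintro ⟨-, hrow, c, -, hc⟩ v ⟨hv, hq⟩
    constructor
    · simp [hhead v hv, dotProduct, hrow]
    · rw [htail v hv, mulVec_dotProduct_mulVec_of_transpose_mul_self hc, hq, mul_zero]
end

section
/- Let k be an algebraically closed field of characteristic 0 and n ≥ 3 an integer. Let G ⊂ GL_{n+1}(k) be the group of invertible matrices A whose first row is (α, 0, …, 0) with α ≠ 0, whose lower-left column is arbitrary, and whose lower-right n×n block B satisfies Bᵀ B = λ·I_n for some λ ∈ k ∖ {0}. Then the orbits of the induced action of G on ℙⁿ (projective space of lines in k^{n+1}, coordinates v₀, …, vₙ) are exactly the three sets: C = {[v] : v₀ = 0 and v₁² + ⋯ + vₙ² = 0}; the set {[v] : v₀ = 0} ∖ C; and the open set {[v] : v₀ ≠ 0}. -/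
/-- Membership in the group `G = Aut(ℙⁿ; Q_{n−2})` of invertible matrices whose first row is
`(α, 0, …, 0)` with `α ≠ 0`, lower-left column arbitrary, and lower-right `n × n` block `B`
with `Bᵀ B = λ·I` for some `λ ≠ 0`. -/
def memG {k : Type*} [Field k] {n : ℕ} (A : Matrix (Fin (n + 1)) (Fin (n + 1)) k) : Prop :=
  IsUnit A ∧ A 0 0 ≠ 0 ∧ (∀ j : Fin (n + 1), j ≠ 0 → A 0 j = 0) ∧
    ∃ lam : k, lam ≠ 0 ∧
      (Matrix.of fun i j : Fin n => A i.succ j.succ).transpose *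
          (Matrix.of fun i j : Fin n => A i.succ j.succ) =
        lam • (1 : Matrix (Fin n) (Fin n) k)

/-- The orbit of a point of `ℙⁿ` under the induced action of the group `G`. -/
def GOrbit {k : Type*} [Field k] {n : ℕ} (p : Projectivization k (Fin (n + 1) → k)) :
    Set (Projectivization k (Fin (n + 1) → k)) :=
  {p' | ∃ A : Matrix (Fin (n + 1)) (Fin (n + 1)) k, memG A ∧
      ∃ hinj : Function.Injective A.mulVecLin,
        Projectivization.map A.mulVecLin hinj p = p'}

open Matrix

section OrthogonalTransitivity

variable {k m : Type*} [Field k] [Fintype m] [DecidableEq m]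

/-- The matrix of the reflection in the hyperplane orthogonal to `w` (when `w ⬝ᵥ w ≠ 0`). -/
def reflectionMatrix (w : m → k) : Matrix m m k :=
  1 - (2 / (w ⬝ᵥ w)) • vecMulVec w w

lemma reflectionMatrix_mulVec (w x : m → k) :
    reflectionMatrix w *ᵥ x = x - (2 / (w ⬝ᵥ w) * (w ⬝ᵥ x)) • w := by
  ext i
  simp [reflectionMatrix, sub_mulVec, smul_mulVec, vecMulVec_mulVec]
  ring

lemma reflectionMatrix_transpose_mul_self {w : m → k} (hw : w ⬝ᵥ w ≠ 0) :
    (reflectionMatrix w)ᵀ * reflectionMatrix w = 1 := by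
  have ht : (reflectionMatrix w)ᵀ = reflectionMatrix w := by
    simp [reflectionMatrix, transpose_vecMulVec]
  rw [ht]
  refine Matrix.ext_of_mulVec_single fun i => ?_
  rw [← mulVec_mulVec, one_mulVec, reflectionMatrix_mulVec w (Pi.single i 1),
    reflectionMatrix_mulVec, dotProduct_sub, dotProduct_smul, smul_eq_mul, sub_sub, ← add_smul,
    sub_eq_self]
  convert zero_smul k w using 2
  field_simp
  ring

/-- Two vectors are orthogonally equivalent if some orthogonal matrix maps the first to the
second. -/
def OrthogonallyEquivalent (x y : m → k) : Prop :=
  ∃ B : Matrix m m k, Bᵀ * B = 1 ∧ B *ᵥ x = y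

lemma OrthogonallyEquivalent.trans {x y z : m → k} (hxy : OrthogonallyEquivalent x y)
    (hyz : OrthogonallyEquivalent y z) : OrthogonallyEquivalent x z := by
  obtain ⟨B, hB, rfl⟩ := hxy
  obtain ⟨D, hD, rfl⟩ := hyz
  refine ⟨D * B, ?_, by rw [mulVec_mulVec]⟩
  rw [transpose_mul, Matrix.mul_assoc, ← Matrix.mul_assoc Dᵀ, hD, Matrix.one_mul, hB]

lemma OrthogonallyEquivalent.neg_right {x y : m → k} (h : OrthogonallyEquivalent x y) :
    OrthogonallyEquivalent x (-y) := by
  obtain ⟨B, hB, rfl⟩ := h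
  exact ⟨-B, by simpa using hB, by rw [neg_mulVec]⟩

lemma orthogonallyEquivalent_reflectionMatrix_mulVec {w : m → k} (hw : w ⬝ᵥ w ≠ 0)
    (x : m → k) : OrthogonallyEquivalent x (reflectionMatrix w *ᵥ x) :=
  ⟨_, reflectionMatrix_transpose_mul_self hw, rfl⟩

lemma orthogonallyEquivalent_of_sub_ne_zero {x y : m → k} (h : x ⬝ᵥ x = y ⬝ᵥ y)
    (hxy : (x - y) ⬝ᵥ (x - y) ≠ 0) : OrthogonallyEquivalent x y := by
  convert orthogonallyEquivalent_reflectionMatrix_mulVec hxy x using 1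
  have hq : (x - y) ⬝ᵥ (x - y) = 2 * ((x - y) ⬝ᵥ x) := by
    simp only [sub_dotProduct, dotProduct_sub, dotProduct_comm y x, ← h]
    ring
  have hc : 2 / ((x - y) ⬝ᵥ (x - y)) * ((x - y) ⬝ᵥ x) = 1 := by
    rw [div_mul_eq_mul_div, ← hq, div_self hxy]
  rw [reflectionMatrix_mulVec, hc, one_smul, sub_sub_cancel]

lemma exists_dotProduct_ne_zero_and_ne_zero {x y : m → k} (hx : x ≠ 0) (hy : y ≠ 0) :
    ∃ w, x ⬝ᵥ w ≠ 0 ∧ y ⬝ᵥ w ≠ 0 := by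
  obtain ⟨i, hi⟩ := Function.ne_iff.mp hx
  obtain ⟨j, hj⟩ := Function.ne_iff.mp hy
  rw [Pi.zero_apply] at hi hj
  by_cases hyi : y i = 0
  · by_cases hxj : x j = 0
    · exact ⟨Pi.single i 1 + Pi.single j 1, by simpa [dotProduct_add, hxj] using hi,
        by simpa [dotProduct_add, hyi] using hj⟩
    · exact ⟨Pi.single j 1, by simpa using hxj, by simpa using hj⟩
  · exact ⟨Pi.single i 1, by simpa using hi, by simpa using hyi⟩

variable [CharZero k]

lemma orthogonallyEquivalent_of_isotropic {x y : m → k} (hx : x ≠ 0) (hy : y ≠ 0)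
    (hqx : x ⬝ᵥ x = 0) (hqy : y ⬝ᵥ y = 0) : OrthogonallyEquivalent x y := by
  have key : ∀ z : m → k, z ⬝ᵥ z = 0 → z ⬝ᵥ y ≠ 0 → OrthogonallyEquivalent z y := by
    intro z hz hzy
    refine orthogonallyEquivalent_of_sub_ne_zero (hz.trans hqy.symm) ?_
    simpa [sub_dotProduct, dotProduct_sub, dotProduct_comm y z, hz, hqy,
      neg_sub_left, ← two_mul] using hzy
  by_cases hxy : x ⬝ᵥ y = 0
  swap
  · exact key x hqx hxy
  obtain ⟨w, hxw, hyw, hw⟩ : ∃ w, x ⬝ᵥ w ≠ 0 ∧ y ⬝ᵥ w ≠ 0 ∧ w ⬝ᵥ w ≠ 0 := by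
    obtain ⟨w, hxw, hyw⟩ := exists_dotProduct_ne_zero_and_ne_zero hx hy
    by_cases hw : w ⬝ᵥ w = 0
    · refine ⟨w + x, by simpa [dotProduct_add, hqx] using hxw,
        by simpa [dotProduct_add, dotProduct_comm y x, hxy] using hyw, ?_⟩
      simpa [dotProduct_add, add_dotProduct, hqx, hw, dotProduct_comm w x, ← two_mul] using hxw
    · exact ⟨w, hxw, hyw, hw⟩
  refine (orthogonallyEquivalent_reflectionMatrix_mulVec hw x).trans (key _ ?_ ?_)
  · rw [dotProduct_mulVec, ← mulVec_transpose, mulVec_mulVec,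
      reflectionMatrix_transpose_mul_self hw, one_mulVec, hqx]
  · rw [reflectionMatrix_mulVec, sub_dotProduct, hxy, smul_dotProduct, dotProduct_comm w x,
      dotProduct_comm w y]
    simp [hw, hxw, hyw]

/-- The orthogonal group acts transitively on the nonzero vectors of given square length. -/
theorem orthogonallyEquivalent_of_dotProduct_self_eq {x y : m → k} (hx : x ≠ 0) (hy : y ≠ 0)
    (h : x ⬝ᵥ x = y ⬝ᵥ y) : OrthogonallyEquivalent x y := by
  by_cases hsub : (x - y) ⬝ᵥ (x - y) = 0
  swap
  · exact orthogonallyEquivalent_of_sub_ne_zero h hsub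
  by_cases hadd : (x - -y) ⬝ᵥ (x - -y) = 0
  swap
  · simpa using (orthogonallyEquivalent_of_sub_ne_zero (by simpa using h) hadd).neg_right
  have hqx : x ⬝ᵥ x = 0 := by
    have h4 : 4 * (x ⬝ᵥ x) = 0 := by
      simp only [sub_dotProduct, dotProduct_sub, neg_dotProduct, dotProduct_neg] at hsub hadd
      linear_combination hsub + hadd + 2 * h
    simpa using h4
  exact orthogonallyEquivalent_of_isotropic hx hy hqx (h ▸ hqx)

end OrthogonalTransitivity

section Orbits

variable {k : Type*} [Field k] {n : ℕ}

lemma mem_GOrbit_iff {p p' : Projectivization k (Fin (n + 1) → k)} :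
    p' ∈ GOrbit p ↔ ∃ A : Matrix (Fin (n + 1)) (Fin (n + 1)) k, memG A ∧
      ∃ c : k, c ≠ 0 ∧ A *ᵥ p.rep = c • p'.rep := by
  refine exists_congr fun A => and_congr_right fun hA => ?_
  have hinj : Function.Injective A.mulVecLin := mulVec_injective_of_isUnit hA.1
  have hmap : Projectivization.map A.mulVecLin hinj p = p' ↔
      ∃ c : kˣ, c • p'.rep = A *ᵥ p.rep := by
    conv_lhs => rw [← p.mk_rep, ← p'.mk_rep, Projectivization.map_mk,
      Projectivization.mk_eq_mk_iff]
    rfl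
  constructor
  · rintro ⟨_, h⟩
    obtain ⟨c, hc⟩ := hmap.mp h
    exact ⟨c, c.ne_zero, hc.symm⟩
  · rintro ⟨c, hc0, hc⟩
    exact ⟨hinj, hmap.mpr ⟨Units.mk0 c hc0, hc.symm⟩⟩

/-- The block lower triangular matrix with diagonal blocks `a`, `B` and lower-left column `u`. -/
def lowerBlock (a : k) (u : Fin n → k) (B : Matrix (Fin n) (Fin n) k) :
    Matrix (Fin (n + 1)) (Fin (n + 1)) k :=
  Matrix.of (Fin.cons (Fin.cons a 0) fun i => Fin.cons (u i) (B i))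

lemma lowerBlock_mulVec (a : k) (u : Fin n → k) (B : Matrix (Fin n) (Fin n) k)
    (v : Fin (n + 1) → k) :
    lowerBlock a u B *ᵥ v = Fin.cons (a * v 0) (v 0 • u + B *ᵥ Fin.tail v) := by
  ext i
  refine Fin.cases ?_ (fun i => ?_) i <;>
    simp [lowerBlock, mulVec, dotProduct, Fin.sum_univ_succ, Fin.tail, mul_comm]

lemma memG_lowerBlock {a : k} (ha : a ≠ 0) (u : Fin n → k) {B : Matrix (Fin n) (Fin n) k}
    (hB : Bᵀ * B = 1) : memG (lowerBlock a u B) := by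
  refine ⟨?_, by simpa [lowerBlock] using ha, fun j hj => ?_, 1, one_ne_zero, ?_⟩
  · have hdet : IsUnit B.det := isUnit_det_of_left_inverse hB
    have hblock : (lowerBlock a u B).submatrix Fin.succ Fin.succ = B := by
      ext i j
      simp [lowerBlock]
    rw [isUnit_iff_isUnit_det, det_succ_row_zero, Fin.sum_univ_succ]
    have h00 : lowerBlock a u B 0 0 = a := rfl
    have h0 : ∀ j : Fin n, lowerBlock a u B 0 j.succ = 0 := fun _ => rfl
    simpa [Fin.succAbove_zero, hblock, h00, h0] using And.intro ha hdet.ne_zero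
  · obtain ⟨i, rfl⟩ := Fin.exists_succ_eq.mpr hj
    simp [lowerBlock]
  · rw [one_smul]
    exact hB

lemma memG.mulVec_zero {A : Matrix (Fin (n + 1)) (Fin (n + 1)) k} (hA : memG A)
    (v : Fin (n + 1) → k) : (A *ᵥ v) 0 = A 0 0 * v 0 := by
  simp [mulVec, dotProduct, Fin.sum_univ_succ, hA.2.2.1]

lemma memG.exists_tail_dotProduct_self {A : Matrix (Fin (n + 1)) (Fin (n + 1)) k}
    (hA : memG A) : ∃ l : k, l ≠ 0 ∧ ∀ v : Fin (n + 1) → k, v 0 = 0 →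
      Fin.tail (A *ᵥ v) ⬝ᵥ Fin.tail (A *ᵥ v) = l * (Fin.tail v ⬝ᵥ Fin.tail v) := by
  obtain ⟨-, -, -, l, hl, hB⟩ := hA
  refine ⟨l, hl, fun v hv => ?_⟩
  have htail : Fin.tail (A *ᵥ v) =
      (Matrix.of fun i j : Fin n => A i.succ j.succ) *ᵥ Fin.tail v := by
    ext i
    simp [Fin.tail, mulVec, dotProduct, Fin.sum_univ_succ, hv]
  rw [htail, dotProduct_mulVec, ← mulVec_transpose, mulVec_mulVec, hB, smul_mulVec, one_mulVec,
    smul_dotProduct, smul_eq_mul]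

variable {p p' : Projectivization k (Fin (n + 1) → k)}

lemma rep_zero_eq_zero_iff_of_mem_GOrbit (h : p' ∈ GOrbit p) :
    p'.rep 0 = 0 ↔ p.rep 0 = 0 := by
  obtain ⟨A, hA, c, hc, h⟩ := mem_GOrbit_iff.mp h
  have h0 := hA.mulVec_zero p.rep
  rw [h, Pi.smul_apply, smul_eq_mul] at h0
  rw [← mul_eq_zero_iff_left hc, h0, mul_eq_zero_iff_left hA.2.1]

lemma tail_rep_isotropic_iff_of_mem_GOrbit (h : p' ∈ GOrbit p) (hp : p.rep 0 = 0) :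
    Fin.tail p'.rep ⬝ᵥ Fin.tail p'.rep = 0 ↔ Fin.tail p.rep ⬝ᵥ Fin.tail p.rep = 0 := by
  obtain ⟨A, hA, c, hc, h⟩ := mem_GOrbit_iff.mp h
  obtain ⟨l, hl, hq⟩ := hA.exists_tail_dotProduct_self
  have hq := hq p.rep hp
  have hs : Fin.tail (c • p'.rep) = c • Fin.tail p'.rep := rfl
  rw [h, hs, smul_dotProduct, dotProduct_smul, smul_eq_mul, smul_eq_mul] at hq
  rw [← mul_eq_zero_iff_left hc, ← mul_eq_zero_iff_left hc, hq, mul_eq_zero_iff_left hl]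

lemma mem_GOrbit_of_rep_zero_ne_zero (hp : p.rep 0 ≠ 0) (hp' : p'.rep 0 ≠ 0) :
    p' ∈ GOrbit p := by
  refine mem_GOrbit_iff.mpr ⟨_, memG_lowerBlock (div_ne_zero hp' hp)
    ((p.rep 0)⁻¹ • (Fin.tail p'.rep - Fin.tail p.rep)) (B := 1) (by simp), 1, one_ne_zero, ?_⟩
  rw [lowerBlock_mulVec, div_mul_cancel₀ _ hp, smul_inv_smul₀ hp, one_mulVec, sub_add_cancel,
    one_smul, Fin.cons_self_tail]

lemma tail_rep_ne_zero (hp : p.rep 0 = 0) : Fin.tail p.rep ≠ 0 := by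
  intro h
  refine p.rep_nonzero ?_
  rw [← Fin.cons_self_tail p.rep, hp, h]
  ext i
  refine Fin.cases ?_ (fun i => ?_) i <;> simp

lemma mem_GOrbit_of_rep_zero_eq_zero [CharZero k] (hp : p.rep 0 = 0) (hp' : p'.rep 0 = 0)
    {c : k} (hc : c ≠ 0) (h : Fin.tail p.rep ⬝ᵥ Fin.tail p.rep =
      c ^ 2 * (Fin.tail p'.rep ⬝ᵥ Fin.tail p'.rep)) : p' ∈ GOrbit p := by
  obtain ⟨B, hB, hBx⟩ := orthogonallyEquivalent_of_dotProduct_self_eq (tail_rep_ne_zero hp)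
    (smul_ne_zero hc (tail_rep_ne_zero hp'))
    (h.trans (by rw [smul_dotProduct, dotProduct_smul, smul_eq_mul, smul_eq_mul]; ring))
  refine mem_GOrbit_iff.mpr ⟨_, memG_lowerBlock one_ne_zero 0 hB, c, hc, ?_⟩
  rw [lowerBlock_mulVec, hBx, hp, ← Fin.cons_self_tail (c • p'.rep)]
  simp [hp', Fin.tail_def, Pi.smul_def]

end Orbits

/-- The orbits of `G = Aut(ℙⁿ; Q_{n−2})` on `ℙⁿ` are exactly: the quadric
`C = {v₀ = 0, v₁² + ⋯ + vₙ² = 0}`, the hyperplane `{v₀ = 0}` minus `C`, and the open set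
`{v₀ ≠ 0}`. -/
theorem stmt10 (k : Type*) [Field k] [IsAlgClosed k] [CharZero k]
    (n : ℕ) (hn : 3 ≤ n)
    (C Hyp : Set (Projectivization k (Fin (n + 1) → k)))
    (hC : C = {p | p.rep 0 = 0 ∧
      (∑ i : Fin (n + 1), if 1 ≤ (i : ℕ) then p.rep i ^ 2 else 0) = 0})
    (hHyp : Hyp = {p | p.rep 0 = 0}) :
    (∀ p ∈ C, GOrbit p = C) ∧
    (∀ p ∈ Hyp \ C, GOrbit p = Hyp \ C) ∧
    (∀ p ∈ {p : Projectivization k (Fin (n + 1) → k) | p.rep 0 ≠ 0},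
      GOrbit p = {p : Projectivization k (Fin (n + 1) → k) | p.rep 0 ≠ 0}) ∧
    C ∪ (Hyp \ C) ∪ {p : Projectivization k (Fin (n + 1) → k) | p.rep 0 ≠ 0} = Set.univ := by
  have hsum : ∀ v : Fin (n + 1) → k,
      (∑ i : Fin (n + 1), if 1 ≤ (i : ℕ) then v i ^ 2 else 0) = Fin.tail v ⬝ᵥ Fin.tail v := by
    intro v
    simp [Fin.sum_univ_succ, dotProduct, Fin.tail, sq]
  simp only [hsum] at hC
  subst hC hHyp
  refine ⟨?_, ?_, ?_, ?_⟩
  · rintro p ⟨hp, hq⟩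
    ext p'
    refine ⟨fun h => ⟨(rep_zero_eq_zero_iff_of_mem_GOrbit h).mpr hp,
      (tail_rep_isotropic_iff_of_mem_GOrbit h hp).mpr hq⟩, ?_⟩
    rintro ⟨hp', hq'⟩
    exact mem_GOrbit_of_rep_zero_eq_zero hp hp' one_ne_zero (by rw [hq, hq', mul_zero])
  · rintro p ⟨hp, hpC⟩
    have hq : Fin.tail p.rep ⬝ᵥ Fin.tail p.rep ≠ 0 := fun hq => hpC ⟨hp, hq⟩
    ext p'
    refine ⟨fun h => ⟨(rep_zero_eq_zero_iff_of_mem_GOrbit h).mpr hp, fun h' =>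
      hq ((tail_rep_isotropic_iff_of_mem_GOrbit h hp).mp h'.2)⟩, ?_⟩
    rintro ⟨hp', hpC'⟩
    have hq' : Fin.tail p'.rep ⬝ᵥ Fin.tail p'.rep ≠ 0 := fun hq' => hpC' ⟨hp', hq'⟩
    obtain ⟨c, hc⟩ := IsAlgClosed.exists_pow_nat_eq
      ((Fin.tail p.rep ⬝ᵥ Fin.tail p.rep) / (Fin.tail p'.rep ⬝ᵥ Fin.tail p'.rep)) two_pos
    have hc0 : c ≠ 0 := by
      rintro rfl
      exact div_ne_zero hq hq' (by rw [← hc, zero_pow two_ne_zero])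
    exact mem_GOrbit_of_rep_zero_eq_zero hp hp' hc0 (by rw [hc, div_mul_cancel₀ _ hq'])
  · intro p hp
    ext p'
    exact ⟨fun h => (rep_zero_eq_zero_iff_of_mem_GOrbit h).not.mpr hp,
      mem_GOrbit_of_rep_zero_ne_zero hp⟩
  · ext p
    simp only [Set.mem_union, Set.mem_sdiff, Set.mem_ofPred_eq, Set.mem_univ, iff_true]
    tauto
end
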